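/- For two chains C_n and C_k with a complete weighted candidate edge set β (one weighted edge (u_i, v_j, w_{ij}) for every i ≤ n, j ≤ k), the maximum weight of a valid alignment equals the maximum, over all strictly increasing partial injections σ from {1, …, n} to {1, …, k}, of the sum of the weights w_{i, σ(i)} over the domain of σ. -/

import Mathlib

/-- An edge conflict for the candidate edge `e = (a, b, w_e)` with another candidate edge
`d = (f, g, w_d)`, `d ≠ e`: (1) `a ∈ anc(f)` and `b ∉ anc(g)`, or (2) `a ∈ desc(f)` and
`b ∉ desc(g)`, or (3) `a = f`, or (4) `b = g`.  Here `anc`/`desc` are expressed via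
`Relation.TransGen` of the edge relations of the two DAGs: `a ∈ anc(f)` means there is a
directed path from `a` to `f`. -/
def Conf {V1 V2 : Type*} (E1 : V1 → V1 → Prop) (E2 : V2 → V2 → Prop)
    (e d : V1 × V2 × ℝ) : Prop :=
  d ≠ e ∧
    ((Relation.TransGen E1 e.1 d.1 ∧ ¬ Relation.TransGen E2 e.2.1 d.2.1) ∨
     (Relation.TransGen E1 d.1 e.1 ∧ ¬ Relation.TransGen E2 d.2.1 e.2.1) ∨
     e.1 = d.1 ∨ e.2.1 = d.2.1)

/-- A valid alignment is a set `M ⊆ β` such that each vertex of `V1` and of `V2` appears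
in at most one edge of `M`, and for every `e ∈ M`, `conf(e) ∩ M = ∅`. -/
def ValidAlignment {V1 V2 : Type*} (E1 : V1 → V1 → Prop) (E2 : V2 → V2 → Prop)
    (β M : Finset (V1 × V2 × ℝ)) : Prop :=
  M ⊆ β ∧
  (∀ e ∈ M, ∀ d ∈ M, e ≠ d → e.1 ≠ d.1 ∧ e.2.1 ≠ d.2.1) ∧
  (∀ e ∈ M, ∀ d ∈ M, ¬ Conf E1 E2 e d)

/-- The edge relation of the chain `C_n`: a directed edge from `v_i` to `v_{i+1}`. -/
def chainE (n : ℕ) (a b : Fin n) : Prop := (a : ℕ) + 1 = (b : ℕ)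

/-!
Reachability in a chain is its linear order. Two edges `(a, b)` and `(f, g)` with `a < f` are
therefore conflict-free exactly when `b < g`, so a valid alignment is a set of edges totally ordered
by strict precedence in both endpoints. Such a set is the graph of a strictly increasing partial
function, with the same weight.
-/

theorem chainE_iff_covBy {n : ℕ} {a b : Fin n} : chainE n a b ↔ a ⋖ b := by
  rw [chainE, Fin.covBy_iff, Nat.covBy_iff_add_one_eq]

theorem transGen_chainE_iff_lt {n : ℕ} {a b : Fin n} :
    Relation.TransGen (chainE n) a b ↔ a < b := by
  have chainE_eq_covBy : chainE n = (· ⋖ ·) := by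
    ext
    exact chainE_iff_covBy
  rw [chainE_eq_covBy, lt_iff_transGen_covBy]

/-- Strict precedence of weighted edges: both endpoints strictly increase, weights are ignored. -/
def EdgePrecedes {α γ : Type*} [LT α] [LT γ] (e d : α × γ × ℝ) : Prop :=
  e.1 < d.1 ∧ e.2.1 < d.2.1

section EdgeChains

variable {α γ : Type*} [Preorder α] [Preorder γ]

theorem injOn_fst_of_isChain {M : Set (α × γ × ℝ)} (hM : IsChain EdgePrecedes M) :
    M.InjOn Prod.fst := by
  intro e he d hd hfst
  by_contra hne
  rcases hM he hd hne with h | h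
  · exact h.1.ne hfst
  · exact h.1.ne hfst.symm

theorem exists_strictMonoOn_of_isChain [Nonempty (α → γ)] {M : Set (α × γ × ℝ)}
    (hM : IsChain EdgePrecedes M) :
    ∃ σ : α → γ, StrictMonoOn σ (Prod.fst '' M) ∧ ∀ e ∈ M, σ e.1 = e.2.1 := by
  obtain ⟨σ₀⟩ := ‹Nonempty (α → γ)›
  let σ := Function.extend (M.domRestrict Prod.fst) (fun e ↦ e.1.2.1) σ₀
  have hσ : ∀ e ∈ M, σ e.1 = e.2.1 := fun e he ↦
    (injOn_fst_of_isChain hM).injective.extend_apply _ σ₀ ⟨e, he⟩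
  refine ⟨σ, ?_, hσ⟩
  rintro _ ⟨e, he, rfl⟩ _ ⟨d, hd, rfl⟩ hlt
  rw [hσ e he, hσ d hd]
  have hne : e ≠ d := fun h ↦ hlt.ne (congrArg Prod.fst h)
  exact ((hM he hd hne).resolve_right fun h ↦ hlt.asymm h.1).2

end EdgeChains

theorem isChain_edgePrecedes_graph {α γ : Type*} [LinearOrder α] [Preorder γ]
    (w : α → γ → ℝ) {s : Set α} {σ : α → γ} (hσ : StrictMonoOn σ s) :
    IsChain EdgePrecedes ((fun i ↦ (i, σ i, w i (σ i))) '' s) := by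
  rintro _ ⟨i, hi, rfl⟩ _ ⟨j, hj, rfl⟩ hne
  have hij : i ≠ j := by
    rintro rfl
    exact hne rfl
  exact hij.lt_or_gt.imp (fun h ↦ ⟨h, hσ hi hj h⟩) (fun h ↦ ⟨h, hσ hj hi h⟩)

section Alignments

variable {α γ : Type*} [LinearOrder α] [Preorder γ] {E₁ : α → α → Prop} {E₂ : γ → γ → Prop}

theorem validAlignment_iff_isChain (h₁ : ∀ a b, Relation.TransGen E₁ a b ↔ a < b)
    (h₂ : ∀ a b, Relation.TransGen E₂ a b ↔ a < b) {β M : Finset (α × γ × ℝ)} :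
    ValidAlignment E₁ E₂ β M ↔ M ⊆ β ∧ IsChain EdgePrecedes (M : Set (α × γ × ℝ)) := by
  simp only [ValidAlignment, Conf, h₁, h₂]
  refine and_congr_right fun _ ↦ ⟨?_, fun hM ↦ ⟨?_, ?_⟩⟩
  · rintro ⟨hdisj, hconf⟩ e he d hd hne
    refine (hdisj e he d hd hne).1.lt_or_gt.imp (fun h ↦ ⟨h, ?_⟩) (fun h ↦ ⟨h, ?_⟩)
    · by_contra hnot
      exact hconf e he d hd ⟨hne.symm, .inl ⟨h, hnot⟩⟩
    · by_contra hnot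
      exact hconf e he d hd ⟨hne.symm, .inr (.inl ⟨h, hnot⟩)⟩
  · intro e he d hd hne
    rcases hM he hd hne with h | h
    · exact ⟨h.1.ne, h.2.ne⟩
    · exact ⟨h.1.ne', h.2.ne'⟩
  · rintro e he d hd ⟨hne, hconf⟩
    rcases hM he hd hne.symm with h | h
    · simp [h.1, h.2, h.1.asymm, h.1.ne, h.2.ne] at hconf
    · simp [h.1, h.2, h.1.asymm, h.1.ne', h.2.ne'] at hconf

variable [Fintype α] [Fintype γ] [DecidableEq (α × γ × ℝ)]

theorem setOf_validAlignment_weight_eq [Nonempty (α → γ)]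
    (h₁ : ∀ a b, Relation.TransGen E₁ a b ↔ a < b)
    (h₂ : ∀ a b, Relation.TransGen E₂ a b ↔ a < b) (w : α → γ → ℝ) :
    {x : ℝ | ∃ M, ValidAlignment E₁ E₂
        (Finset.univ.image (fun p : α × γ ↦ (p.1, p.2, w p.1 p.2))) M ∧ ∑ e ∈ M, e.2.2 = x} =
      {x : ℝ | ∃ (s : Finset α) (σ : α → γ), StrictMonoOn σ s ∧ ∑ i ∈ s, w i (σ i) = x} := by
  ext x
  simp only [validAlignment_iff_isChain h₁ h₂, Set.mem_ofPred_eq]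
  constructor
  · rintro ⟨M, ⟨hsub, hchain⟩, rfl⟩
    obtain ⟨σ, hmono, hσ⟩ := exists_strictMonoOn_of_isChain hchain
    refine ⟨M.image Prod.fst, σ, by rwa [Finset.coe_image], ?_⟩
    rw [Finset.sum_image (injOn_fst_of_isChain hchain)]
    refine Finset.sum_congr rfl fun e he ↦ ?_
    obtain ⟨p, -, rfl⟩ := Finset.mem_image.mp (hsub he)
    exact congrArg (w p.1) (hσ _ he)
  · rintro ⟨s, σ, hmono, rfl⟩
    refine ⟨s.image (fun i ↦ (i, σ i, w i (σ i))), ⟨?_, ?_⟩, ?_⟩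
    · exact Finset.image_subset_iff.mpr fun i _ ↦
        Finset.mem_image.mpr ⟨(i, σ i), Finset.mem_univ _, rfl⟩
    · rw [Finset.coe_image]
      exact isChain_edgePrecedes_graph w hmono
    · exact Finset.sum_image fun i _ j _ h ↦ congrArg Prod.fst h

theorem chain_alignment_optimum_general (h₁ : ∀ a b, Relation.TransGen E₁ a b ↔ a < b)
    (h₂ : ∀ a b, Relation.TransGen E₂ a b ↔ a < b) (w : α → γ → ℝ) :
    sSup {x : ℝ | ∃ M, ValidAlignment E₁ E₂
          (Finset.univ.image (fun p : α × γ ↦ (p.1, p.2, w p.1 p.2))) M ∧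
          ∑ e ∈ M, e.2.2 = x} =
      sSup {x : ℝ | ∃ (s : Finset α) (σ : α → γ),
          StrictMonoOn σ s ∧ ∑ i ∈ s, w i (σ i) = x} := by
  rcases isEmpty_or_nonempty (α → γ) with hempty | _
  · -- There is no total `σ` here; `sSup ∅ = 0` agrees with the weight of the empty alignment.
    have : IsEmpty γ := (isEmpty_fun.mp hempty).2
    have hM (M : Finset (α × γ × ℝ)) : M = ∅ := M.eq_empty_of_isEmpty
    simp [hM, ValidAlignment]
  · rw [setOf_validAlignment_weight_eq h₁ h₂ w]

end Alignments

open scoped Classical in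
/-- For two chains `C_n` and `C_k` with a complete weighted candidate edge set (one edge
`(u_i, v_j, w_{ij})` for every `i ≤ n`, `j ≤ k`), the maximum weight of a valid alignment
equals the maximum, over all strictly increasing partial injections `σ` from `{1,…,n}` to
`{1,…,k}`, of the sum of the weights `w_{i,σ(i)}` over the domain of `σ`. -/
theorem chain_alignment_optimum (n k : ℕ) (w : Fin n → Fin k → ℝ)
    (hw : ∀ i j, w i j ∈ Set.Icc (0 : ℝ) 1) :
    sSup {x : ℝ | ∃ M, ValidAlignment (chainE n) (chainE k)
          (Finset.univ.image (fun p : Fin n × Fin k => (p.1, p.2, w p.1 p.2))) M ∧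
          ∑ e ∈ M, e.2.2 = x} =
      sSup {x : ℝ | ∃ (s : Finset (Fin n)) (σ : Fin n → Fin k),
          (∀ i ∈ s, ∀ j ∈ s, i < j → σ i < σ j) ∧ ∑ i ∈ s, w i (σ i) = x} :=
  chain_alignment_optimum_general (fun _ _ ↦ transGen_chainE_iff_lt)
    (fun _ _ ↦ transGen_chainE_iff_lt) w
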